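/- Let η : ℝ → ℂ be a smooth (C^∞) function with support contained in [−2, 2], and let φ : ℝ → ℝ be a smooth (C^∞) function with 0 ≤ φ ≤ 1 and support contained in {τ : 1/2 ≤ |τ| ≤ 2}. Then there exists a constant C > 0 (depending only on η and φ) such that for every a ≥ 0: Σ_{j ∈ ℤ} (1 + 2^j + a)^{1/2} · ‖h_j^a‖_{L²(ℝ)} ≤ C (1 + a)^{1/2}, where h_j^a(t) = ∫_ℝ e^{2πitτ} φ(2^{−j} τ) ( ∫_ℝ e^{−2πisτ} η(s) ( e^{2a·min(s,0)} − e^{−a|s|} ) ds ) dτ. -/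

import Mathlib

/-!
The kernel `e^{2a min(s, 0)} - e^{-a|s|}` is the dilate `W (a s)` of one Lipschitz profile `W`.
Differentiating `W (a s)` costs a factor `a`, but `s ↦ a V (a s)` has the same `L¹` norm as `V`.
Hence the Fourier transform `F` of `W (a ·) η` satisfies `|F| ≤ K`, `|ξ| |F| ≤ K` and
`|ξ|² |F| ≤ K (1 + a)` with `K` independent of `a`, and these combine to
`(1 + ξ²) (1 + |ξ| + a) |F ξ|² ≲ 1 + a`. On the `j`-th annulus `|ξ|` is comparable to `2^j`, so
by Plancherel the square of the `j`-th term is `≲ (1 + a) 2^j / (1 + 4^j)`, whose square root is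
summable over `j ∈ ℤ`.
-/

open MeasureTheory Real
open Set Filter Topology
open scoped FourierTransform ENNReal ContDiff

theorem norm_sq_Lp_two_eq_integral {α F : Type*} [MeasurableSpace α] {μ : Measure α}
    [NormedAddCommGroup F] [InnerProductSpace ℂ F] (u : Lp F 2 μ) :
    ‖u‖ ^ 2 = ∫ x, ‖u x‖ ^ 2 ∂μ := by
  have h := L2.inner_def (𝕜 := ℂ) u u
  simp only [inner_self_eq_norm_sq_to_K, ← RCLike.ofReal_pow, integral_ofReal] at h
  exact RCLike.ofReal_injective h

section Plancherel

variable {V F : Type*} [NormedAddCommGroup V] [InnerProductSpace ℝ V] [FiniteDimensional ℝ V]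
  [MeasurableSpace V] [BorelSpace V] [NormedAddCommGroup F] {f : V → F}

theorem continuous_fourier [NormedSpace ℂ F] (hf : Integrable f) : Continuous (𝓕 f) :=
  VectorFourier.fourierIntegral_continuous Real.continuous_fourierChar continuous_inner hf

theorem norm_fourier_le_integral_norm [NormedSpace ℂ F] (f : V → F) (ξ : V) :
    ‖𝓕 f ξ‖ ≤ ∫ x, ‖f x‖ :=
  VectorFourier.norm_fourierIntegral_le_integral_norm ..

theorem integral_fourier_smul_eq [NormedSpace ℂ F] [CompleteSpace F] (ψ : SchwartzMap V ℂ)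
    (hf : Integrable f) : ∫ ξ, 𝓕 ψ ξ • f ξ = ∫ x, ψ x • 𝓕 f x := by
  simpa using! VectorFourier.integral_fourierIntegral_smul_eq_flip (L := innerₗ V)
    Real.continuous_fourierChar continuous_inner ψ.integrable hf

variable [InnerProductSpace ℂ F] [CompleteSpace F]

-- Both sides represent the same tempered distribution.
theorem coeFn_fourier_toLp_ae_eq (hf : Integrable f) (hf₂ : MemLp f 2) :
    (𝓕 (hf₂.toLp f) : Lp F 2 (volume : Measure V)) =ᵐ[volume] 𝓕 f := by
  refine ae_eq_of_integral_contDiff_smul_eq ((Lp.memLp _).locallyIntegrable one_le_two)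
    (continuous_fourier hf).locallyIntegrable fun g hg hgc => ?_
  have hg' : ContDiff ℝ ∞ (Complex.ofRealCLM ∘ g) := by fun_prop
  set ψ := (show HasCompactSupport (Complex.ofRealCLM ∘ g) from hgc.comp_left rfl).toSchwartzMap hg'
  calc ∫ x, g x • (𝓕 (hf₂.toLp f) : Lp F 2 (volume : Measure V)) x
      = Lp.toTemperedDistribution (𝓕 (hf₂.toLp f)) ψ := by
        simp [ψ, Lp.toTemperedDistribution_apply]
    _ = ∫ ξ, 𝓕 ψ ξ • hf₂.toLp f ξ := by
        rw [← Lp.fourier_toTemperedDistribution_eq, TemperedDistribution.fourier_apply,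
          Lp.toTemperedDistribution_apply]
    _ = ∫ ξ, 𝓕 ψ ξ • f ξ := integral_congr_ae <| by
        filter_upwards [hf₂.coeFn_toLp] with ξ hξ using by rw [hξ]
    _ = ∫ x, ψ x • 𝓕 f x := integral_fourier_smul_eq ψ hf
    _ = ∫ x, g x • 𝓕 f x := by simp [ψ]

theorem memLp_fourier (hf : Integrable f) (hf₂ : MemLp f 2) : MemLp (𝓕 f) 2 :=
  (memLp_congr_ae (coeFn_fourier_toLp_ae_eq hf hf₂)).1 (Lp.memLp _)

theorem integral_norm_sq_fourier (hf : Integrable f) (hf₂ : MemLp f 2) :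
    ∫ ξ, ‖𝓕 f ξ‖ ^ 2 = ∫ x, ‖f x‖ ^ 2 :=
  calc ∫ ξ, ‖𝓕 f ξ‖ ^ 2 = ∫ ξ, ‖(𝓕 (hf₂.toLp f) : Lp F 2 (volume : Measure V)) ξ‖ ^ 2 :=
        integral_congr_ae <| by
          filter_upwards [coeFn_fourier_toLp_ae_eq hf hf₂] with ξ hξ using by rw [hξ]
    _ = ∫ x, ‖hf₂.toLp f x‖ ^ 2 := by
        rw [← norm_sq_Lp_two_eq_integral, ← norm_sq_Lp_two_eq_integral, Lp.norm_fourier_eq]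
    _ = ∫ x, ‖f x‖ ^ 2 := integral_congr_ae <| by
        filter_upwards [hf₂.coeFn_toLp] with ξ hξ using by rw [hξ]

theorem integral_norm_sq_fourierInv (hf : Integrable f) (hf₂ : MemLp f 2) :
    ∫ ξ, ‖𝓕⁻ f ξ‖ ^ 2 = ∫ x, ‖f x‖ ^ 2 := by
  simp_rw [Real.fourierInv_eq_fourier_neg]
  rw [integral_neg_eq_self (fun ξ => ‖𝓕 f ξ‖ ^ 2), integral_norm_sq_fourier hf hf₂]

end Plancherel

theorem integral_of_hasDerivWithinAt_Ici_of_tendsto {E : Type*} [NormedAddCommGroup E]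
    [NormedSpace ℝ E] [CompleteSpace E] {f f' : ℝ → E} {m n : E} (hf : Continuous f)
    (hderiv : ∀ x, HasDerivWithinAt f (f' x) (Ici x) x) (hf' : Integrable f')
    (hbot : Tendsto f atBot (𝓝 m)) (htop : Tendsto f atTop (𝓝 n)) : ∫ x, f' x = n - m := by
  refine tendsto_nhds_unique
    (intervalIntegral_tendsto_integral hf' tendsto_neg_atTop_atBot tendsto_id) ?_
  refine (htop.sub (hbot.comp tendsto_neg_atTop_atBot)).congr fun b => ?_
  exact (intervalIntegral.integral_eq_sub_of_hasDeriv_right hf.continuousOn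
    (fun x _ => (hderiv x).Ioi_of_Ici) hf'.intervalIntegrable).symm

section FourierDecay

variable {E : Type*} [NormedAddCommGroup E] [NormedSpace ℂ E] [CompleteSpace E] {f f' f'' : ℝ → E}

theorem fourier_of_hasDerivWithinAt_Ici (hf : Continuous f) (hfc : HasCompactSupport f)
    (hderiv : ∀ x, HasDerivWithinAt f (f' x) (Ici x) x) (hf' : Integrable f') (ξ : ℝ) :
    𝓕 f' ξ = (2 * π * Complex.I * ξ) • 𝓕 f ξ := by
  set e : ℝ → ℂ := fun x => (𝐞 (-(x * ξ)) : ℂ)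
  have he : Continuous e := by fun_prop
  have hde (x : ℝ) : HasDerivAt e (-(2 * π * Complex.I * ξ) * e x) x := by
    refine ((Real.hasDerivAt_fourierChar (-(x * ξ))).scomp x
      (hasDerivAt_mul_const ξ).neg).congr_deriv ?_
    simp only [neg_smul, Complex.real_smul, neg_mul, neg_inj, e]
    ring
  have hef : Integrable fun x => (2 * π * Complex.I * ξ) • (e x • f x) :=
    ((he.smul hf).integrable_of_hasCompactSupport hfc.smul_left).smul _
  have hef' : Integrable fun x => e x • f' x :=
    hf'.bdd_smul 1 he.aestronglyMeasurable (.of_forall fun x => (Circle.norm_coe _).le)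
  have hdef (x : ℝ) : HasDerivWithinAt (fun x => e x • f x)
      (e x • f' x - (2 * π * Complex.I * ξ) • (e x • f x)) (Ici x) x := by
    refine ((hde x).hasDerivWithinAt.smul (hderiv x)).congr_deriv ?_
    module
  have hlim := (hfc.smul_left (f := e)).is_zero_at_infty
  rw [cocompact_eq_atBot_atTop, tendsto_sup] at hlim
  have key := integral_of_hasDerivWithinAt_Ici_of_tendsto (he.smul hf) hdef
    (hef'.sub hef) hlim.1 hlim.2
  rw [integral_sub hef' hef, integral_smul, sub_self, sub_eq_zero] at key
  rw [Real.fourier_real_eq, Real.fourier_real_eq]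
  exact key

theorem abs_mul_norm_fourier_le (hf : Continuous f) (hfc : HasCompactSupport f)
    (hderiv : ∀ x, HasDerivWithinAt f (f' x) (Ici x) x) (hf' : Integrable f') (ξ : ℝ) :
    |ξ| * ‖𝓕 f ξ‖ ≤ ‖𝓕 f' ξ‖ := by
  rw [fourier_of_hasDerivWithinAt_Ici hf hfc hderiv hf', norm_smul]
  gcongr
  simp only [Complex.norm_mul, Complex.norm_ofNat, Complex.norm_real, Real.norm_eq_abs,
    Complex.norm_I, mul_one, abs_of_pos Real.pi_pos]
  exact le_mul_of_one_le_left (abs_nonneg ξ) (by linarith [Real.pi_gt_three])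

theorem weighted_norm_sq_fourier_le {a K : ℝ} (ha : 0 ≤ a) (hf : Continuous f)
    (hfc : HasCompactSupport f) (hderiv : ∀ x, HasDerivWithinAt f (f' x) (Ici x) x)
    (hf' : Continuous f') (hf'c : HasCompactSupport f')
    (hderiv' : ∀ x, HasDerivWithinAt f' (f'' x) (Ici x) x) (hf'' : Integrable f'')
    (h₀ : ∫ x, ‖f x‖ ≤ K) (h₁ : ∫ x, ‖f' x‖ ≤ K) (h₂ : ∫ x, ‖f'' x‖ ≤ K * (1 + a)) (ξ : ℝ) :
    (1 + ξ ^ 2) * ((1 + |ξ| + a) * ‖𝓕 f ξ‖ ^ 2) ≤ 4 * K ^ 2 * (1 + a) := by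
  have hd := abs_mul_norm_fourier_le hf hfc hderiv
    (hf'.integrable_of_hasCompactSupport hf'c) ξ
  have hd' := abs_mul_norm_fourier_le hf' hf'c hderiv' hf'' ξ
  have hF₀ : ‖𝓕 f ξ‖ ≤ K := (norm_fourier_le_integral_norm f ξ).trans h₀
  have hF₁ : |ξ| * ‖𝓕 f ξ‖ ≤ K := hd.trans ((norm_fourier_le_integral_norm f' ξ).trans h₁)
  have hF₂ : |ξ| * (|ξ| * ‖𝓕 f ξ‖) ≤ K * (1 + a) :=
    (mul_le_mul_of_nonneg_left hd (abs_nonneg ξ)).trans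
      (hd'.trans ((norm_fourier_le_integral_norm f'' ξ).trans h₂))
  have hK : 0 ≤ K := (norm_nonneg _).trans hF₀
  calc (1 + ξ ^ 2) * ((1 + |ξ| + a) * ‖𝓕 f ξ‖ ^ 2)
      = (1 + a) * (‖𝓕 f ξ‖ * ‖𝓕 f ξ‖) + (1 + a) * ((|ξ| * ‖𝓕 f ξ‖) * (|ξ| * ‖𝓕 f ξ‖))
        + (|ξ| * ‖𝓕 f ξ‖) * ‖𝓕 f ξ‖
        + (|ξ| * ‖𝓕 f ξ‖) * (|ξ| * (|ξ| * ‖𝓕 f ξ‖)) := by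
        rw [← sq_abs ξ]
        ring
    _ ≤ (1 + a) * (K * K) + (1 + a) * (K * K) + K * K + K * (K * (1 + a)) := by gcongr
    _ ≤ 4 * K ^ 2 * (1 + a) := by nlinarith [mul_nonneg ha (sq_nonneg K)]

end FourierDecay

section Dilation

theorem integrable_smul_comp_mul_left {E : Type*} [NormedAddCommGroup E] [NormedSpace ℝ E]
    {g : ℝ → E} (hg : Integrable g) (a : ℝ) : Integrable fun s => a • g (a * s) := by
  obtain rfl | ha := eq_or_ne a 0
  · simp
  · exact (hg.comp_mul_left' ha).smul a

theorem integral_norm_smul_comp_mul_left_le {E : Type*} [NormedAddCommGroup E] [NormedSpace ℝ E]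
    (g : ℝ → E) (a : ℝ) : ∫ s, ‖a • g (a * s)‖ ≤ ∫ s, ‖g s‖ := by
  obtain rfl | ha := eq_or_ne a 0
  · simpa using integral_nonneg fun s => norm_nonneg (g s)
  · simp_rw [norm_smul]
    rw [integral_const_mul, Measure.integral_comp_mul_left (fun s => ‖g s‖), smul_eq_mul,
      abs_inv, Real.norm_eq_abs, mul_inv_cancel_left₀ (abs_ne_zero.2 ha)]

theorem integral_norm_smul_le_of_norm_right_le {α E : Type*} [MeasurableSpace α] {μ : Measure α}
    [NormedAddCommGroup E] [NormedSpace ℝ E] {w : α → ℝ} {u : α → E} {B : ℝ}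
    (hw : Integrable w μ) (hu : ∀ x, ‖u x‖ ≤ B) :
    ∫ x, ‖w x • u x‖ ∂μ ≤ (∫ x, ‖w x‖ ∂μ) * B := by
  rw [← integral_mul_const]
  refine integral_mono_of_nonneg (.of_forall fun x => norm_nonneg _) (hw.norm.mul_const B)
    (.of_forall fun x => ?_)
  simpa only [norm_smul] using mul_le_mul_of_nonneg_left (hu x) (norm_nonneg (w x))

theorem integral_norm_smul_le_of_norm_left_le {α E : Type*} [MeasurableSpace α] {μ : Measure α}
    [NormedAddCommGroup E] [NormedSpace ℝ E] {w : α → ℝ} {u : α → E} {B : ℝ}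
    (hw : ∀ x, ‖w x‖ ≤ B) (hu : Integrable u μ) :
    ∫ x, ‖w x • u x‖ ∂μ ≤ B * ∫ x, ‖u x‖ ∂μ := by
  rw [← integral_const_mul]
  refine integral_mono_of_nonneg (.of_forall fun x => norm_nonneg _) (hu.norm.const_mul B)
    (.of_forall fun x => ?_)
  simpa only [norm_smul] using mul_le_mul_of_nonneg_right (hw x) (norm_nonneg (u x))

theorem hasDerivWithinAt_Ici_comp_mul_left_smul {E : Type*} [NormedAddCommGroup E]
    [NormedSpace ℝ E] {W W' : ℝ → ℝ} {u u' : ℝ → E} {a : ℝ} (ha : 0 ≤ a)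
    (hW : ∀ x, HasDerivWithinAt W (W' x) (Ici x) x) (hu : ∀ x, HasDerivAt u (u' x) x) (s : ℝ) :
    HasDerivWithinAt (fun s => W (a * s) • u s) (W (a * s) • u' s + (a * W' (a * s)) • u s)
      (Ici s) s := by
  have hWa : HasDerivWithinAt (fun s => W (a * s)) (a * W' (a * s)) (Ici s) s :=
    (hW (a * s)).scomp s (hasDerivAt_const_mul a).hasDerivWithinAt
      fun t ht => mul_le_mul_of_nonneg_left ht ha
  exact hWa.smul (hu s).hasDerivWithinAt

end Dilation

section Profile

variable {E : Type*} [NormedAddCommGroup E] {W W' W'' V : ℝ → ℝ} {u u' u'' : ℝ → E}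
  {a B B' B'' M : ℝ}

theorem integral_norm_add_le {α : Type*} [MeasurableSpace α] {μ : Measure α} {f g : α → E}
    (hf : Integrable f μ) (hg : Integrable g μ) :
    ∫ x, ‖f x + g x‖ ∂μ ≤ (∫ x, ‖f x‖ ∂μ) + ∫ x, ‖g x‖ ∂μ := by
  rw [← integral_add hf.norm hg.norm]
  exact integral_mono (hf.add hg).norm (hf.norm.add hg.norm) fun x => norm_add_le _ _

theorem integrable_mul_comp_mul_left_smul [NormedSpace ℝ E] (hV : Integrable V) (a : ℝ)
    (hu : Continuous u) (huB : ∀ s, ‖u s‖ ≤ B) : Integrable fun s => (a * V (a * s)) • u s :=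
  (integrable_smul_comp_mul_left hV a).smul_bdd B hu.aestronglyMeasurable (.of_forall huB)

theorem integral_norm_mul_comp_mul_left_smul_le [NormedSpace ℝ E] (hV : Integrable V)
    (hVM : ∫ x, ‖V x‖ ≤ M) (a : ℝ) (huB : ∀ s, ‖u s‖ ≤ B) :
    ∫ s, ‖(a * V (a * s)) • u s‖ ≤ M * B :=
  (integral_norm_smul_le_of_norm_right_le (integrable_smul_comp_mul_left hV a) huB).trans <|
    mul_le_mul_of_nonneg_right ((integral_norm_smul_comp_mul_left_le V a).trans hVM)
      ((norm_nonneg _).trans (huB 0))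

/-- A profile to be dilated: a bounded continuous function `W` with a continuous integrable right
derivative `W'`, which in turn has an integrable right derivative `W''`; the constant `M` bounds
`W` uniformly and `W'`, `W''` in `L¹`. Derivatives are one-sided so that `W''` may jump. -/
structure IsDilationProfile (W W' W'' : ℝ → ℝ) (M : ℝ) : Prop where
  continuous : Continuous W
  norm_le (x : ℝ) : ‖W x‖ ≤ M
  hasDerivWithinAt (x : ℝ) : HasDerivWithinAt W (W' x) (Ici x) x
  continuous_deriv : Continuous W'
  integrable_deriv : Integrable W'
  integral_norm_deriv_le : ∫ x, ‖W' x‖ ≤ M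
  hasDerivWithinAt_deriv (x : ℝ) : HasDerivWithinAt W' (W'' x) (Ici x) x
  integrable_deriv₂ : Integrable W''
  integral_norm_deriv₂_le : ∫ x, ‖W'' x‖ ≤ M

namespace IsDilationProfile

section RealScalars

variable [NormedSpace ℝ E]

theorem hasDerivWithinAt_deriv_comp_mul_left_smul
    (hW : IsDilationProfile W W' W'' M) (ha : 0 ≤ a) (hu : ∀ x, HasDerivAt u (u' x) x)
    (hu' : ∀ x, HasDerivAt u' (u'' x) x) (s : ℝ) :
    HasDerivWithinAt (fun s => W (a * s) • u' s + (a * W' (a * s)) • u s)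
      (W (a * s) • u'' s + (a * W' (a * s)) • (2 : ℝ) • u' s + (a * W'' (a * s)) • a • u s)
      (Ici s) s := by
  have h₁ := hasDerivWithinAt_Ici_comp_mul_left_smul ha hW.hasDerivWithinAt hu' s
  have h₂ := hasDerivWithinAt_Ici_comp_mul_left_smul ha hW.hasDerivWithinAt_deriv
    (fun x => (hu x).const_smul a) s
  refine ((h₁.add h₂).congr_deriv ?_).congr (fun t _ => ?_) ?_
  all_goals
    simp only [Pi.add_apply, Pi.smul_apply]
    module

theorem integrable_comp_mul_left_smul (hW : IsDilationProfile W W' W'' M) (a : ℝ)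
    (hu : Integrable u) : Integrable fun s => W (a * s) • u s :=
  hu.bdd_smul M (hW.continuous.comp (continuous_const_mul a)).aestronglyMeasurable
    (.of_forall fun s => hW.norm_le (a * s))

theorem integral_norm_comp_mul_left_smul_le (hW : IsDilationProfile W W' W'' M) (a : ℝ)
    (hu : Integrable u) (huB : ∫ s, ‖u s‖ ≤ B) : ∫ s, ‖W (a * s) • u s‖ ≤ M * B :=
  (integral_norm_smul_le_of_norm_left_le (fun s => hW.norm_le (a * s)) hu).trans <|
    mul_le_mul_of_nonneg_left huB ((norm_nonneg _).trans (hW.norm_le 0))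

theorem integrable_deriv_comp_mul_left_smul (hW : IsDilationProfile W W' W'' M) (a : ℝ)
    (hu : Continuous u) (huB : ∀ s, ‖u s‖ ≤ B) (hu' : Integrable u') :
    Integrable fun s => W (a * s) • u' s + (a * W' (a * s)) • u s :=
  (hW.integrable_comp_mul_left_smul a hu').add
    (integrable_mul_comp_mul_left_smul hW.integrable_deriv a hu huB)

theorem integral_norm_deriv_comp_mul_left_smul_le (hW : IsDilationProfile W W' W'' M)
    (a : ℝ) (hu : Continuous u) (huB : ∀ s, ‖u s‖ ≤ B) (hu' : Integrable u')
    (hu'B : ∫ s, ‖u' s‖ ≤ B') :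
    ∫ s, ‖W (a * s) • u' s + (a * W' (a * s)) • u s‖ ≤ M * B' + M * B :=
  (integral_norm_add_le (hW.integrable_comp_mul_left_smul a hu')
      (integrable_mul_comp_mul_left_smul hW.integrable_deriv a hu huB)).trans <|
    add_le_add (hW.integral_norm_comp_mul_left_smul_le a hu' hu'B)
      (integral_norm_mul_comp_mul_left_smul_le hW.integrable_deriv hW.integral_norm_deriv_le a huB)

theorem integrable_deriv₂_comp_mul_left_smul (hW : IsDilationProfile W W' W'' M) (a : ℝ)
    (hu : Continuous u) (huB : ∀ s, ‖u s‖ ≤ B) (hu' : Continuous u') (hu'B : ∀ s, ‖u' s‖ ≤ B')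
    (hu'' : Integrable u'') :
    Integrable fun s =>
      W (a * s) • u'' s + (a * W' (a * s)) • (2 : ℝ) • u' s + (a * W'' (a * s)) • a • u s :=
  (hW.integrable_deriv_comp_mul_left_smul a (hu'.const_smul 2)
    (fun s => (norm_smul_le _ _).trans (mul_le_mul_of_nonneg_left (hu'B s) (norm_nonneg _)))
    hu'').add
  (integrable_mul_comp_mul_left_smul hW.integrable_deriv₂ a (hu.const_smul a)
    fun s => (norm_smul_le _ _).trans (mul_le_mul_of_nonneg_left (huB s) (norm_nonneg _)))

theorem integral_norm_deriv₂_comp_mul_left_smul_le (hW : IsDilationProfile W W' W'' M)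
    (ha : 0 ≤ a) (hu : Continuous u) (huB : ∀ s, ‖u s‖ ≤ B) (hu' : Continuous u')
    (hu'B : ∀ s, ‖u' s‖ ≤ B') (hu'' : Integrable u'') (hu''B : ∫ s, ‖u'' s‖ ≤ B'') :
    ∫ s, ‖W (a * s) • u'' s + (a * W' (a * s)) • (2 : ℝ) • u' s + (a * W'' (a * s)) • a • u s‖ ≤
      M * B'' + M * (2 * B') + M * (a * B) := by
  have h2u' : Continuous fun s => (2 : ℝ) • u' s := hu'.const_smul 2
  have h2B (s : ℝ) : ‖(2 : ℝ) • u' s‖ ≤ 2 * B' := by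
    simpa [norm_smul] using hu'B s
  have haB (s : ℝ) : ‖a • u s‖ ≤ a * B := by
    simpa [norm_smul, abs_of_nonneg ha] using mul_le_mul_of_nonneg_left (huB s) ha
  refine (integral_norm_add_le (hW.integrable_deriv_comp_mul_left_smul a h2u' h2B hu'')
    (integrable_mul_comp_mul_left_smul hW.integrable_deriv₂ a (hu.const_smul a) haB)).trans ?_
  exact add_le_add (hW.integral_norm_deriv_comp_mul_left_smul_le a h2u' h2B hu'' hu''B)
    (integral_norm_mul_comp_mul_left_smul_le hW.integrable_deriv₂ hW.integral_norm_deriv₂_le a haB)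

end RealScalars

variable [NormedSpace ℂ E] [CompleteSpace E]

theorem weighted_norm_sq_fourier_comp_mul_left_smul_le (hW : IsDilationProfile W W' W'' M)
    (hu : ContDiff ℝ 2 u) (huc : HasCompactSupport u) (huB : ∀ s, ‖u s‖ ≤ B)
    (hu'B : ∀ s, ‖deriv u s‖ ≤ B) (hi : ∫ s, ‖u s‖ ≤ B) (hi' : ∫ s, ‖deriv u s‖ ≤ B)
    (hi'' : ∫ s, ‖deriv (deriv u) s‖ ≤ B) (ha : 0 ≤ a) (ξ : ℝ) :
    (1 + ξ ^ 2) * ((1 + |ξ| + a) * ‖𝓕 (fun s => W (a * s) • u s) ξ‖ ^ 2) ≤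
      4 * (3 * M * B) ^ 2 * (1 + a) := by
  have hu₁ : ContDiff ℝ 1 (deriv u) := hu.deriv'
  have hdu (x : ℝ) : HasDerivAt u (deriv u x) x := (hu.differentiable two_ne_zero x).hasDerivAt
  have hdu₁ (x : ℝ) : HasDerivAt (deriv u) (deriv (deriv u) x) x :=
    (hu₁.differentiable one_ne_zero x).hasDerivAt
  have huI := hu.continuous.integrable_of_hasCompactSupport huc (μ := volume)
  have huI' := hu₁.continuous.integrable_of_hasCompactSupport huc.deriv (μ := volume)
  have huI'' :=
    hu₁.continuous_deriv_one.integrable_of_hasCompactSupport huc.deriv.deriv (μ := volume)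
  have hWa : Continuous fun s => W (a * s) := hW.continuous.comp (continuous_const_mul a)
  have hWa' : Continuous fun s => a * W' (a * s) :=
    (hW.continuous_deriv.comp (continuous_const_mul a)).const_mul a
  have hMB : 0 ≤ M * B :=
    mul_nonneg ((norm_nonneg _).trans (hW.norm_le 0)) ((norm_nonneg _).trans (huB 0))
  refine weighted_norm_sq_fourier_le (f := fun s => W (a * s) • u s) ha (hWa.smul hu.continuous)
    huc.smul_left (hasDerivWithinAt_Ici_comp_mul_left_smul ha hW.hasDerivWithinAt hdu)
    ((hWa.smul hu₁.continuous).add (hWa'.smul hu.continuous))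
    (huc.deriv.smul_left.add huc.smul_left)
    (hW.hasDerivWithinAt_deriv_comp_mul_left_smul ha hdu hdu₁)
    (hW.integrable_deriv₂_comp_mul_left_smul a hu.continuous huB hu₁.continuous hu'B huI'')
    ?_ ?_ ?_ ξ
  · exact (hW.integral_norm_comp_mul_left_smul_le a huI hi).trans (by linarith)
  · refine (hW.integral_norm_deriv_comp_mul_left_smul_le a hu.continuous huB huI' hi').trans ?_
    linarith
  · refine (hW.integral_norm_deriv₂_comp_mul_left_smul_le ha hu.continuous huB
      hu₁.continuous hu'B huI'' hi'').trans ?_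
    linarith [mul_nonneg hMB ha]

theorem exists_weighted_norm_sq_fourier_comp_mul_left_smul_le (hW : IsDilationProfile W W' W'' M)
    (hu : ContDiff ℝ 2 u) (huc : HasCompactSupport u) :
    ∃ K, 0 < K ∧ ∀ a, 0 ≤ a → ∀ ξ, (1 + ξ ^ 2) * ((1 + |ξ| + a) *
      ‖𝓕 (fun s => W (a * s) • u s) ξ‖ ^ 2) ≤ K * (1 + a) := by
  obtain ⟨B₀, hB₀⟩ := hu.continuous.bounded_above_of_compact_support huc
  obtain ⟨B₁, hB₁⟩ := (hu.continuous_deriv one_le_two).bounded_above_of_compact_support huc.deriv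
  obtain ⟨B, hB⟩ := Finset.exists_le {B₀, B₁, ∫ s, ‖u s‖, ∫ s, ‖deriv u s‖,
    ∫ s, ‖deriv (deriv u) s‖}
  simp only [Finset.mem_insert, Finset.mem_singleton, forall_eq_or_imp, forall_eq] at hB
  obtain ⟨hB₀B, hB₁B, hi, hi', hi''⟩ := hB
  refine ⟨4 * (3 * M * B) ^ 2 + 1, by positivity, fun a ha ξ =>
    (hW.weighted_norm_sq_fourier_comp_mul_left_smul_le hu huc (fun s => (hB₀ s).trans hB₀B)
      (fun s => (hB₁ s).trans hB₁B) hi hi' hi'' ha ξ).trans ?_⟩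
  gcongr
  exact le_add_of_nonneg_right zero_le_one

end IsDilationProfile

end Profile

section ExpProfile

theorem hasDerivWithinAt_Ici_ite_le {E : Type*} [NormedAddCommGroup E] [NormedSpace ℝ E]
    {f g f' g' : ℝ → E} (hf : ∀ x, HasDerivAt f (f' x) x) (hg : ∀ x, HasDerivAt g (g' x) x)
    (c x : ℝ) : HasDerivWithinAt (fun y => if c ≤ y then g y else f y)
      (if c ≤ x then g' x else f' x) (Ici x) x := by
  split_ifs with hx
  · exact (hg x).hasDerivWithinAt.congr (fun y hy => if_pos (hx.trans hy)) (if_pos hx)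
  · have hlt : ∀ᶠ y in 𝓝 x, y < c := eventually_lt_nhds (not_le.1 hx)
    exact ((hf x).congr_of_eventuallyEq <|
      hlt.mono fun y hy => if_neg (not_le.2 hy)).hasDerivWithinAt

/-- The profile `W` for which the kernel `e^{2a min(s, 0)} - e^{-a|s|}` is `W (a s)`. -/
noncomputable def expProfile (x : ℝ) : ℝ := Real.exp (2 * min x 0) - Real.exp (-|x|)

/-- The derivative of `expProfile`. -/
noncomputable def expProfileDeriv (x : ℝ) : ℝ :=
  if 0 ≤ x then Real.exp (-x) else 2 * Real.exp (2 * x) - Real.exp x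

/-- The right derivative of `expProfileDeriv`, with a jump at the origin. -/
noncomputable def expProfileDeriv₂ (x : ℝ) : ℝ :=
  if 0 ≤ x then -Real.exp (-x) else 4 * Real.exp (2 * x) - Real.exp x

theorem expProfile_mul {a : ℝ} (ha : 0 ≤ a) (s : ℝ) :
    expProfile (a * s) = Real.exp (2 * a * min s 0) - Real.exp (-(a * |s|)) := by
  rw [expProfile, mul_assoc, mul_min_of_nonneg _ _ ha, mul_zero, abs_mul, abs_of_nonneg ha]

theorem expProfile_eq_ite (x : ℝ) :
    expProfile x = if 0 ≤ x then 1 - Real.exp (-x) else Real.exp (2 * x) - Real.exp x := by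
  split_ifs with hx
  · simp [expProfile, min_eq_right hx, abs_of_nonneg hx]
  · simp [expProfile, min_eq_left (not_le.1 hx).le, abs_of_neg (not_le.1 hx)]

theorem norm_expProfile_le_one (x : ℝ) : ‖expProfile x‖ ≤ 1 := by
  have h₁ : Real.exp (2 * min x 0) ≤ 1 := Real.exp_le_one_iff.2 (by linarith [min_le_right x 0])
  have h₂ : Real.exp (-|x|) ≤ 1 := Real.exp_le_one_iff.2 (neg_nonpos.2 (abs_nonneg x))
  rw [Real.norm_eq_abs, expProfile, abs_le]
  constructor <;> linarith [Real.exp_pos (2 * min x 0), Real.exp_pos (-|x|)]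

theorem hasDerivAt_exp_mul (c x : ℝ) :
    HasDerivAt (fun x => Real.exp (c * x)) (c * Real.exp (c * x)) x :=
  (hasDerivAt_const_mul c).exp.congr_deriv (mul_comm _ _)

theorem hasDerivAt_exp_neg (x : ℝ) : HasDerivAt (fun x => Real.exp (-x)) (-Real.exp (-x)) x :=
  (hasDerivAt_neg x).exp.congr_deriv (mul_neg_one _)

theorem hasDerivWithinAt_expProfile (x : ℝ) :
    HasDerivWithinAt expProfile (expProfileDeriv x) (Ici x) x := by
  rw [funext expProfile_eq_ite]
  exact hasDerivWithinAt_Ici_ite_le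
    (fun x => (hasDerivAt_exp_mul 2 x).sub (Real.hasDerivAt_exp x))
    (fun x => ((hasDerivAt_exp_neg x).const_sub 1).congr_deriv (neg_neg _)) 0 x

theorem hasDerivWithinAt_expProfileDeriv (x : ℝ) :
    HasDerivWithinAt expProfileDeriv (expProfileDeriv₂ x) (Ici x) x :=
  have hneg (x : ℝ) : HasDerivAt (fun x => 2 * Real.exp (2 * x) - Real.exp x)
      (4 * Real.exp (2 * x) - Real.exp x) x :=
    (((hasDerivAt_exp_mul 2 x).const_mul 2).sub (Real.hasDerivAt_exp x)).congr_deriv (by ring)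
  hasDerivWithinAt_Ici_ite_le hneg hasDerivAt_exp_neg 0 x

theorem continuous_expProfileDeriv : Continuous expProfileDeriv := by
  refine Continuous.if_le (by fun_prop) (by fun_prop) continuous_const continuous_id ?_
  rintro x rfl
  norm_num

theorem integrable_ite_exp (b c d : ℝ) : Integrable fun x : ℝ =>
    if 0 ≤ x then b * Real.exp (-x) else c * Real.exp (2 * x) - d * Real.exp x := by
  have hpos : IntegrableOn (fun x => b * Real.exp (-x)) (Ici 0) :=
    ((integrableOn_Ici_iff_integrableOn_Ioi).2 (integrableOn_exp_neg_Ioi 0)).const_mul b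
  have hneg : IntegrableOn (fun x => c * Real.exp (2 * x) - d * Real.exp x) (Iic 0) :=
    ((integrableOn_exp_mul_Iic two_pos 0).const_mul c).sub ((integrableOn_exp_Iic 0).const_mul d)
  exact Integrable.piecewise (s := Ici 0) measurableSet_Ici hpos
    (hneg.mono_set (by simpa only [compl_Ici] using Iio_subset_Iic_self))

theorem integrable_expProfileDeriv : Integrable expProfileDeriv := by
  simpa only [one_mul] using! integrable_ite_exp 1 2 1

theorem integrable_expProfileDeriv₂ : Integrable expProfileDeriv₂ := by
  simpa only [one_mul, neg_one_mul] using! integrable_ite_exp (-1) 4 1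

theorem exists_isDilationProfile_expProfile :
    ∃ M, IsDilationProfile expProfile expProfileDeriv expProfileDeriv₂ M := by
  obtain ⟨M, hM⟩ := Finset.exists_le {1, ∫ x, ‖expProfileDeriv x‖, ∫ x, ‖expProfileDeriv₂ x‖}
  simp only [Finset.mem_insert, Finset.mem_singleton, forall_eq_or_imp, forall_eq] at hM
  exact ⟨M, {
    continuous := by unfold expProfile; fun_prop
    norm_le := fun x => (norm_expProfile_le_one x).trans hM.1
    hasDerivWithinAt := hasDerivWithinAt_expProfile
    continuous_deriv := continuous_expProfileDeriv
    integrable_deriv := integrable_expProfileDeriv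
    integral_norm_deriv_le := hM.2.1
    hasDerivWithinAt_deriv := hasDerivWithinAt_expProfileDeriv
    integrable_deriv₂ := integrable_expProfileDeriv₂
    integral_norm_deriv₂_le := hM.2.2 }⟩

end ExpProfile

theorem summable_rpow_two_zpow_div_one_add_sq :
    Summable fun j : ℤ => ((2 : ℝ) ^ j / (1 + ((2 : ℝ) ^ j) ^ 2)) ^ ((1 : ℝ) / 2) := by
  have hnat : Summable fun n : ℕ => ((2 : ℝ) ^ n / (1 + ((2 : ℝ) ^ n) ^ 2)) ^ ((1 : ℝ) / 2) := by
    refine Summable.of_nonneg_of_le (fun n => by positivity) (fun n => ?_)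
      (summable_geometric_of_lt_one (r := (2⁻¹ : ℝ) ^ ((1 : ℝ) / 2)) (by positivity)
        (Real.rpow_lt_one (by norm_num) (by norm_num) (by norm_num)))
    rw [← Real.rpow_mul_natCast (by norm_num), mul_comm, Real.rpow_natCast_mul (by norm_num)]
    gcongr
    rw [inv_pow, div_le_iff₀ (by positivity), ← div_eq_inv_mul, le_div_iff₀ (by positivity)]
    nlinarith
  refine Summable.of_nat_of_neg (by simpa only [zpow_natCast] using hnat) ?_
  refine hnat.congr fun n => ?_
  simp only [zpow_neg, zpow_natCast]
  congr 1
  field_simp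
  ring

theorem exists_pos_le_one_le_abs_of_zero_notMem_tsupport {F : Type*} [Zero F] {g : ℝ → F}
    (hg : (0 : ℝ) ∉ tsupport g) : ∃ r, 0 < r ∧ r ≤ 1 ∧ ∀ x, g x ≠ 0 → r ≤ |x| := by
  obtain ⟨ε, hε, hgε⟩ :=
    Metric.eventually_nhds_iff_ball.1 (notMem_tsupport_iff_eventuallyEq.1 hg)
  refine ⟨min ε 1, lt_min hε one_pos, min_le_right _ _, fun x hx => ?_⟩
  contrapose! hx
  exact hgε x (by simpa using hx.trans_le (min_le_left _ _))

section FrequencyCutoff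

variable {E : Type*} [NormedAddCommGroup E]

/-- The frequency localization of `f` to scale `R`: the function whose Fourier transform is
`φ (ξ / R) • 𝓕 f ξ`. For `R = 2 ^ j` this is the `j`-th Littlewood–Paley piece of `f`. -/
noncomputable def frequencyCutoff [NormedSpace ℂ E] (φ : ℝ → ℂ) (R : ℝ) (f : ℝ → E) : ℝ → E :=
  𝓕⁻ fun ξ => φ (R⁻¹ * ξ) • 𝓕 f ξ

theorem frequencyCutoff_eq_integral (φ : ℝ → ℂ) (R : ℝ) (f : ℝ → ℂ) (t : ℝ) :
    frequencyCutoff φ R f t = ∫ τ : ℝ, Complex.exp (2 * π * t * τ * Complex.I) *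
      (φ (R⁻¹ * τ) * ∫ s : ℝ, Complex.exp (-(2 * π * s * τ) * Complex.I) * f s) := by
  rw [frequencyCutoff, Real.fourierInv_eq']
  refine integral_congr_ae (.of_forall fun τ => ?_)
  simp only [Real.fourier_real_eq_integral_exp_smul, smul_eq_mul, RCLike.inner_apply,
    conj_trivial]
  push_cast
  simp only [neg_mul]
  congr 2
  ring_nf

variable [InnerProductSpace ℂ E] [CompleteSpace E] {φ : ℝ → ℂ} {f : ℝ → E}

theorem memLp_comp_mul_left {F : Type*} [NormedAddCommGroup F] {g : ℝ → F} {p : ℝ≥0∞}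
    (hg : MemLp g p) {c : ℝ} (hc : c ≠ 0) : MemLp (fun x => g (c * x)) p := by
  refine MemLp.comp_of_map ?_ (measurable_const_mul c).aemeasurable
  rw [Real.map_volume_mul_left hc]
  exact hg.smul_measure ENNReal.ofReal_ne_top

theorem integral_norm_sq_frequencyCutoff (hφ : MemLp φ 2) {R : ℝ} (hR : 0 < R)
    (hf : Integrable f) (hf₂ : MemLp f 2) :
    ∫ t, ‖frequencyCutoff φ R f t‖ ^ 2 = R * ∫ σ, ‖φ σ‖ ^ 2 * ‖𝓕 f (R * σ)‖ ^ 2 := by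
  have hφR : MemLp (fun ξ => φ (R⁻¹ * ξ)) 2 := memLp_comp_mul_left hφ (inv_ne_zero hR.ne')
  have hb (ξ : ℝ) : ‖𝓕 f ξ‖ ≤ ∫ s, ‖f s‖ := norm_fourier_le_integral_norm f ξ
  have h₁ : Integrable fun ξ => φ (R⁻¹ * ξ) • 𝓕 f ξ :=
    memLp_one_iff_integrable.1 ((memLp_fourier hf hf₂).smul hφR)
  have h₂ : MemLp (fun ξ => φ (R⁻¹ * ξ) • 𝓕 f ξ) 2 :=
    (memLp_top_of_bound (continuous_fourier hf).aestronglyMeasurable _ (.of_forall hb)).smul hφR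
  rw [frequencyCutoff, integral_norm_sq_fourierInv h₁ h₂]
  have := Measure.integral_comp_inv_mul_left (fun σ => ‖φ σ‖ ^ 2 * ‖𝓕 f (R * σ)‖ ^ 2) R
  rw [abs_of_pos hR, smul_eq_mul] at this
  simpa only [norm_smul, mul_pow, mul_inv_cancel_left₀ hR.ne'] using this

theorem norm_sq_mul_left_le_of_weighted_le {F : Type*} [NormedAddCommGroup F] {g : ℝ → F}
    {r a D R σ : ℝ} (hr : 0 < r) (hr₁ : r ≤ 1) (hσ : r ≤ |σ|) (ha : 0 ≤ a) (hR : 0 < R)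
    (hD : ∀ ξ, (1 + ξ ^ 2) * ((1 + |ξ| + a) * ‖g ξ‖ ^ 2) ≤ D) :
    ‖g (R * σ)‖ ^ 2 ≤ (r ^ 3)⁻¹ * D / ((1 + R ^ 2) * (1 + R + a)) := by
  have hRσ : r * R ≤ |R * σ| := by
    rw [abs_mul, abs_of_pos hR, mul_comm r]
    exact mul_le_mul_of_nonneg_left hσ hR.le
  have h₁ : r ^ 2 * (1 + R ^ 2) ≤ 1 + (R * σ) ^ 2 := by
    rw [← sq_abs (R * σ), mul_one_add, ← mul_pow]
    gcongr
    exact pow_le_one₀ hr.le hr₁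
  have h₂ : r * (1 + R + a) ≤ 1 + |R * σ| + a := by
    rw [mul_add, mul_one_add]
    gcongr
    exact mul_le_of_le_one_left ha hr₁
  rw [le_div_iff₀ (by positivity), inv_mul_eq_div, le_div_iff₀ (by positivity)]
  calc ‖g (R * σ)‖ ^ 2 * ((1 + R ^ 2) * (1 + R + a)) * r ^ 3
      = r ^ 2 * (1 + R ^ 2) * (r * (1 + R + a) * ‖g (R * σ)‖ ^ 2) := by ring
    _ ≤ (1 + (R * σ) ^ 2) * ((1 + |R * σ| + a) * ‖g (R * σ)‖ ^ 2) := by gcongr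
    _ ≤ D := hD _

theorem mul_integral_norm_sq_frequencyCutoff_le {r a D R : ℝ} (hφ : MemLp φ 2) (hr : 0 < r)
    (hr₁ : r ≤ 1) (hφr : ∀ σ, φ σ ≠ 0 → r ≤ |σ|) (ha : 0 ≤ a) (hR : 0 < R) (hf : Integrable f)
    (hf₂ : MemLp f 2)
    (hD : ∀ ξ, (1 + ξ ^ 2) * ((1 + |ξ| + a) * ‖𝓕 f ξ‖ ^ 2) ≤ D) :
    (1 + R + a) * ∫ t, ‖frequencyCutoff φ R f t‖ ^ 2 ≤
      R / (1 + R ^ 2) * (((r ^ 3)⁻¹ * ∫ σ, ‖φ σ‖ ^ 2) * D) := by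
  have hint : ∫ σ, ‖φ σ‖ ^ 2 * ‖𝓕 f (R * σ)‖ ^ 2 ≤
      ∫ σ, ‖φ σ‖ ^ 2 * ((r ^ 3)⁻¹ * D / ((1 + R ^ 2) * (1 + R + a))) := by
    refine integral_mono_of_nonneg (.of_forall fun σ => by positivity)
      (((memLp_two_iff_integrable_sq_norm hφ.1).1 hφ).mul_const _) (.of_forall fun σ => ?_)
    obtain hσ | hσ := eq_or_ne (φ σ) 0
    · simp [hσ]
    · exact mul_le_mul_of_nonneg_left
        (norm_sq_mul_left_le_of_weighted_le hr hr₁ (hφr σ hσ) ha hR hD) (sq_nonneg _)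
  rw [integral_mul_const] at hint
  rw [integral_norm_sq_frequencyCutoff hφ hR hf hf₂]
  refine (mul_le_mul_of_nonneg_left (mul_le_mul_of_nonneg_left hint hR.le)
    (by positivity)).trans_eq ?_
  field_simp

theorem rpow_mul_rpow_integral_norm_sq_frequencyCutoff_le {r a D R : ℝ} (hφ : MemLp φ 2)
    (hr : 0 < r) (hr₁ : r ≤ 1) (hφr : ∀ σ, φ σ ≠ 0 → r ≤ |σ|) (ha : 0 ≤ a) (hR : 0 < R)
    (hf : Integrable f) (hf₂ : MemLp f 2)
    (hD : ∀ ξ, (1 + ξ ^ 2) * ((1 + |ξ| + a) * ‖𝓕 f ξ‖ ^ 2) ≤ D) :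
    (1 + R + a) ^ ((1 : ℝ) / 2) * (∫ t, ‖frequencyCutoff φ R f t‖ ^ 2) ^ ((1 : ℝ) / 2) ≤
      (R / (1 + R ^ 2)) ^ ((1 : ℝ) / 2) *
        (((r ^ 3)⁻¹ * ∫ σ, ‖φ σ‖ ^ 2) ^ ((1 : ℝ) / 2) * D ^ ((1 : ℝ) / 2)) := by
  have hI : 0 ≤ ∫ t, ‖frequencyCutoff φ R f t‖ ^ 2 := integral_nonneg fun t => sq_nonneg _
  have hA : 0 ≤ (r ^ 3)⁻¹ * ∫ σ, ‖φ σ‖ ^ 2 :=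
    mul_nonneg (by positivity) (integral_nonneg fun σ => sq_nonneg _)
  have hD₀ : 0 ≤ D := le_trans (by positivity) (hD 0)
  rw [← Real.mul_rpow (by positivity) hI, ← Real.mul_rpow hA hD₀,
    ← Real.mul_rpow (by positivity) (by positivity)]
  exact Real.rpow_le_rpow (by positivity)
    (mul_integral_norm_sq_frequencyCutoff_le hφ hr hr₁ hφr ha hR hf hf₂ hD) (by norm_num)

theorem exists_tsum_frequencyCutoff_le (hφ : MemLp φ 2) (hφ₀ : (0 : ℝ) ∉ tsupport φ) :
    ∃ C : ℝ, 0 < C ∧ ∀ (a D : ℝ) (f : ℝ → E), 0 ≤ a → Integrable f → MemLp f 2 →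
      (∀ ξ, (1 + ξ ^ 2) * ((1 + |ξ| + a) * ‖𝓕 f ξ‖ ^ 2) ≤ D) →
      Summable (fun j : ℤ => (1 + (2 : ℝ) ^ j + a) ^ ((1 : ℝ) / 2) *
        (∫ t, ‖frequencyCutoff φ (2 ^ j) f t‖ ^ 2) ^ ((1 : ℝ) / 2)) ∧
      ∑' j : ℤ, (1 + (2 : ℝ) ^ j + a) ^ ((1 : ℝ) / 2) *
        (∫ t, ‖frequencyCutoff φ (2 ^ j) f t‖ ^ 2) ^ ((1 : ℝ) / 2) ≤ C * D ^ ((1 : ℝ) / 2) := by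
  obtain ⟨r, hr, hr₁, hφr⟩ := exists_pos_le_one_le_abs_of_zero_notMem_tsupport hφ₀
  have hsum := summable_rpow_two_zpow_div_one_add_sq
  set g : ℤ → ℝ := fun j => ((2 : ℝ) ^ j / (1 + ((2 : ℝ) ^ j) ^ 2)) ^ ((1 : ℝ) / 2)
  set A := ((r ^ 3)⁻¹ * ∫ σ, ‖φ σ‖ ^ 2) ^ ((1 : ℝ) / 2)
  have hA : 0 ≤ A := Real.rpow_nonneg
    (mul_nonneg (by positivity) (integral_nonneg fun σ => sq_nonneg _)) _
  have hg : 0 ≤ ∑' j, g j := tsum_nonneg fun j => by positivity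
  refine ⟨(∑' j, g j) * A + 1, add_pos_of_nonneg_of_pos (mul_nonneg hg hA) one_pos,
    fun a D f ha hf hf₂ hD => ?_⟩
  have hle (j : ℤ) := rpow_mul_rpow_integral_norm_sq_frequencyCutoff_le hφ hr hr₁ hφr ha
    (zpow_pos two_pos j) hf hf₂ hD
  have hterms := Summable.of_nonneg_of_le (fun j => mul_nonneg (by positivity)
    (Real.rpow_nonneg (integral_nonneg fun t => sq_nonneg _) _)) hle (hsum.mul_right _)
  refine ⟨hterms, (hterms.tsum_le_tsum hle (hsum.mul_right _)).trans ?_⟩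
  have hD₀ : 0 ≤ D := le_trans (by positivity) (hD 0)
  rw [tsum_mul_right, ← mul_assoc]
  gcongr
  exact le_add_of_nonneg_right zero_le_one

end FrequencyCutoff

theorem frequencyCutoff_two_zpow_expProfile_smul {a : ℝ} (ha : 0 ≤ a) (φ η : ℝ → ℂ) (j : ℤ)
    (t : ℝ) : frequencyCutoff φ (2 ^ j) (fun s => expProfile (a * s) • η s) t =
      ∫ τ : ℝ, Complex.exp (2 * π * t * τ * Complex.I) *
        (φ ((2 : ℝ) ^ (-j) * τ) *
          ∫ s : ℝ, Complex.exp (-(2 * π * s * τ) * Complex.I) *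
            (η s * ((Real.exp (2 * a * min s 0) - Real.exp (-(a * |s|)) : ℝ) : ℂ))) := by
  simp_rw [frequencyCutoff_eq_integral, zpow_neg, expProfile_mul ha, Complex.real_smul,
    mul_comm (η _)]

theorem hasCompactSupport_of_support_subset_abs_le {F : Type*} [Zero F] {g : ℝ → F} {R : ℝ}
    (hg : ∀ x ∈ Function.support g, |x| ≤ R) : HasCompactSupport g :=
  .of_support_subset_isCompact isCompact_Icc fun x hx => abs_le.1 (hg x hx)

theorem zero_notMem_tsupport_of_support_subset_le_abs {F : Type*} [Zero F] {g : ℝ → F} {r : ℝ}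
    (hr : 0 < r) (hg : ∀ x ∈ Function.support g, r ≤ |x|) : (0 : ℝ) ∉ tsupport g := fun h =>
  have hr₀ : r ≤ |(0 : ℝ)| := closure_minimal hg (isClosed_le continuous_const continuous_abs) h
  hr.not_ge (by simpa only [abs_zero] using hr₀)

theorem stmt_15_general (η : ℝ → ℂ) (hη : ContDiff ℝ 2 η) (hηsupp : HasCompactSupport η)
    (φ : ℝ → ℂ) (hφ : MemLp φ 2) (hφsupp : (0 : ℝ) ∉ tsupport φ) :
    ∃ C : ℝ, 0 < C ∧ ∀ a : ℝ, 0 ≤ a →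
      Summable (fun j : ℤ =>
        (1 + (2 : ℝ) ^ j + a) ^ ((1 : ℝ) / 2) *
          (∫ t : ℝ, ‖∫ τ : ℝ, Complex.exp (2 * π * t * τ * Complex.I) *
              (φ ((2 : ℝ) ^ (-j) * τ) *
                ∫ s : ℝ, Complex.exp (-(2 * π * s * τ) * Complex.I) *
                  (η s * ((Real.exp (2 * a * min s 0) - Real.exp (-(a * |s|)) : ℝ) : ℂ)))‖ ^ 2) ^
            ((1 : ℝ) / 2)) ∧
      (∑' j : ℤ,
        (1 + (2 : ℝ) ^ j + a) ^ ((1 : ℝ) / 2) *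
          (∫ t : ℝ, ‖∫ τ : ℝ, Complex.exp (2 * π * t * τ * Complex.I) *
              (φ ((2 : ℝ) ^ (-j) * τ) *
                ∫ s : ℝ, Complex.exp (-(2 * π * s * τ) * Complex.I) *
                  (η s * ((Real.exp (2 * a * min s 0) - Real.exp (-(a * |s|)) : ℝ) : ℂ)))‖ ^ 2) ^
            ((1 : ℝ) / 2)) ≤ C * (1 + a) ^ ((1 : ℝ) / 2) := by
  obtain ⟨M, hW⟩ := exists_isDilationProfile_expProfile
  obtain ⟨K, hK₀, hK⟩ := hW.exists_weighted_norm_sq_fourier_comp_mul_left_smul_le hη hηsupp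
  obtain ⟨C, hC₀, hC⟩ := exists_tsum_frequencyCutoff_le (E := ℂ) hφ hφsupp
  refine ⟨C * K ^ ((1 : ℝ) / 2), by positivity, fun a ha => ?_⟩
  have hf : Continuous fun s => expProfile (a * s) • η s :=
    (hW.continuous.comp (continuous_const_mul a)).smul hη.continuous
  have hfc : HasCompactSupport fun s => expProfile (a * s) • η s :=
    hηsupp.smul_left (f := fun s => expProfile (a * s))
  have key := hC a _ _ ha (hf.integrable_of_hasCompactSupport hfc)
    (hf.memLp_of_hasCompactSupport hfc) (hK a ha)
  rw [Real.mul_rpow hK₀.le (by positivity), ← mul_assoc] at key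
  simpa only [frequencyCutoff_two_zpow_expProfile_smul ha] using key

theorem stmt_15 (η : ℝ → ℂ) (hη : ContDiff ℝ (⊤ : ℕ∞) η)
    (hηsupp : Function.support η ⊆ Set.Icc (-2) 2)
    (φ : ℝ → ℝ) (hφ : ContDiff ℝ (⊤ : ℕ∞) φ)
    (hφ0 : ∀ τ, 0 ≤ φ τ) (hφ1 : ∀ τ, φ τ ≤ 1)
    (hφsupp : Function.support φ ⊆ {τ : ℝ | 1 / 2 ≤ |τ| ∧ |τ| ≤ 2}) :
    ∃ C : ℝ, 0 < C ∧ ∀ a : ℝ, 0 ≤ a →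
      Summable (fun j : ℤ =>
        (1 + (2 : ℝ) ^ j + a) ^ ((1 : ℝ) / 2) *
          (∫ t : ℝ, ‖∫ τ : ℝ, Complex.exp (2 * π * t * τ * Complex.I) *
              ((φ ((2 : ℝ) ^ (-j) * τ) : ℂ) *
                ∫ s : ℝ, Complex.exp (-(2 * π * s * τ) * Complex.I) *
                  (η s * ((Real.exp (2 * a * min s 0) - Real.exp (-(a * |s|)) : ℝ) : ℂ)))‖ ^ 2) ^
            ((1 : ℝ) / 2)) ∧
      (∑' j : ℤ,
        (1 + (2 : ℝ) ^ j + a) ^ ((1 : ℝ) / 2) *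
          (∫ t : ℝ, ‖∫ τ : ℝ, Complex.exp (2 * π * t * τ * Complex.I) *
              ((φ ((2 : ℝ) ^ (-j) * τ) : ℂ) *
                ∫ s : ℝ, Complex.exp (-(2 * π * s * τ) * Complex.I) *
                  (η s * ((Real.exp (2 * a * min s 0) - Real.exp (-(a * |s|)) : ℝ) : ℂ)))‖ ^ 2) ^
            ((1 : ℝ) / 2)) ≤ C * (1 + a) ^ ((1 : ℝ) / 2) := by
  have hsupp (τ : ℝ) (hτ : τ ∈ Function.support fun τ => (φ τ : ℂ)) : 1 / 2 ≤ |τ| ∧ |τ| ≤ 2 :=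
    hφsupp (Complex.ofReal_ne_zero.1 hτ)
  exact stmt_15_general η (contDiff_infty.1 hη 2)
    (.of_support_subset_isCompact isCompact_Icc hηsupp) (fun τ => φ τ)
    ((Complex.continuous_ofReal.comp hφ.continuous).memLp_of_hasCompactSupport
      (hasCompactSupport_of_support_subset_abs_le fun τ hτ => (hsupp τ hτ).2))
    (zero_notMem_tsupport_of_support_subset_le_abs one_half_pos fun τ hτ => (hsupp τ hτ).1)
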